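/- arXiv:1901.05396 — 9 statements merged into one kernel-verified Lean document; each statement's English description precedes it below -/
import Mathlib

section
/- Let (X,d) be a metric space. Then U(X) is a ring if and only if every subset of X that is not Bourbaki bounded in X contains an infinite uniformly isolated subset. -/
/-- `U(X)` is a ring: the pointwise product of any two uniformly continuous
real-valued functions on `X` is uniformly continuous. -/
def IsRingUC (X : Type*) [MetricSpace X] : Prop :=
  ∀ f g : X → ℝ, UniformContinuous f → UniformContinuous g →
    UniformContinuous (fun x => f x * g x)

/-- `A` is Bourbaki bounded in `X`: every uniformly continuous real-valued
function on `X` is bounded on `A`. -/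
def BourbakiBounded {X : Type*} [MetricSpace X] (A : Set X) : Prop :=
  ∀ f : X → ℝ, UniformContinuous f → ∃ M : ℝ, ∀ x ∈ A, |f x| ≤ M

/-- `A` is uniformly isolated: there is `ε > 0` such that `B(x,ε) = {x}` for all `x ∈ A`. -/
def UnifIsolated {X : Type*} [MetricSpace X] (A : Set X) : Prop :=
  ∃ ε > (0 : ℝ), ∀ x ∈ A, Metric.ball x ε = {x}

/-!
Both properties say that whenever `x n ≠ y n` and `dist (x n) (y n) → 0`, the set of all `x n` is
Bourbaki bounded.

If `f * h` is uniformly continuous for every bounded uniformly continuous `h`, the functionals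
`h ↦ f (x n) * h (x n) - f (y n) * h (y n)` converge pointwise to `0` on the Banach space of these
`h`, so by Banach–Steinhaus they are bounded in norm. Testing them on a bump of height `1` at `x n`
that vanishes at `y n` bounds `|f (x n)|`. Conversely, where `f` and `g` are bounded, their product
has small oscillation.
-/

open Filter Set Topology
open scoped BoundedContinuousFunction

/-- The space of bounded uniformly continuous real functions, as a subspace of the bounded
continuous ones, from which it inherits the supremum norm. -/
def boundedUniformContinuous (X : Type*) [UniformSpace X] : Submodule ℝ (X →ᵇ ℝ) where
  carrier := {h | UniformContinuous h}
  add_mem' hf hg := hf.add hg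
  zero_mem' := uniformContinuous_const
  smul_mem' c _ hf := hf.const_smul c

-- Without these two shortcuts, instance search finds no operator norm on the dual of the subspace.
noncomputable instance (X : Type*) [UniformSpace X] :
    NormedAddCommGroup (boundedUniformContinuous X) :=
  Submodule.normedAddCommGroup _

noncomputable instance (X : Type*) [UniformSpace X] : NormedSpace ℝ (boundedUniformContinuous X) :=
  Submodule.normedSpace _

theorem isClosed_boundedUniformContinuous (X : Type*) [UniformSpace X] :
    IsClosed (boundedUniformContinuous X : Set (X →ᵇ ℝ)) :=
  IsSeqClosed.isClosed fun _ _ hu hlim =>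
    (BoundedContinuousFunction.tendsto_iff_tendstoUniformly.1 hlim).uniformContinuous
      (Frequently.of_forall hu)

instance (X : Type*) [UniformSpace X] : CompleteSpace (boundedUniformContinuous X) :=
  (isClosed_boundedUniformContinuous X).completeSpace_coe

theorem exists_boundedUniformContinuous_eq_one_eq_zero {X : Type*} [PseudoMetricSpace X] {x y : X}
    (hxy : dist x y ≠ 0) :
    ∃ h : boundedUniformContinuous X, ‖h‖ ≤ 1 ∧ h.1 x = 1 ∧ h.1 y = 0 := by
  let bump : X → ℝ := fun z => min 1 ((dist x y)⁻¹ * dist z y)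
  have uniformContinuous_bump : UniformContinuous bump :=
    (LipschitzWith.id.const_min 1).uniformContinuous.comp
      ((uniformContinuous_id.dist uniformContinuous_const).const_mul' _)
  have norm_bump_le (z : X) : ‖bump z‖ ≤ 1 := by
    rw [Real.norm_of_nonneg (by positivity)]
    exact min_le_left _ _
  refine ⟨⟨.ofNormedAddCommGroup bump uniformContinuous_bump.continuous 1 norm_bump_le,
    uniformContinuous_bump⟩, ?_, ?_, ?_⟩
  · exact BoundedContinuousFunction.norm_ofNormedAddCommGroup_le _ zero_le_one norm_bump_le
  · simp [bump, inv_mul_cancel₀ hxy]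
  · simp [bump]

theorem tendsto_mul_sub_mul_zero {ι R : Type*} [SeminormedRing R] {l : Filter ι}
    {a a' b b' : ι → R} (ha : IsBoundedUnder (· ≤ ·) l (norm ∘ a))
    (hb : IsBoundedUnder (· ≤ ·) l (norm ∘ b))
    (haa' : Tendsto (fun i => a i - a' i) l (𝓝 0))
    (hbb' : Tendsto (fun i => b i - b' i) l (𝓝 0)) :
    Tendsto (fun i => a i * b i - a' i * b' i) l (𝓝 0) := by
  have hlim := ((haa'.zero_mul_isBoundedUnder_le hb).add
    (isBoundedUnder_le_mul_tendsto_zero ha hbb')).sub (haa'.mul hbb')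
  simp only [add_zero, mul_zero, sub_zero] at hlim
  exact hlim.congr fun i => by noncomm_ring

section VanishingPairs

variable {X : Type*} [MetricSpace X]

/-- A sequence of pairs of distinct points whose distances tend to zero: the obstruction to
infinitely many of the points `x n` being uniformly isolated. -/
structure VanishingPairs (x y : ℕ → X) : Prop where
  ne : ∀ n, x n ≠ y n
  tendsto_dist : Tendsto (fun n => dist (x n) (y n)) atTop (𝓝 0)

theorem VanishingPairs.of_dist_lt {x y : ℕ → X} (hne : ∀ n, x n ≠ y n)
    (hdist : ∀ n : ℕ, dist (x n) (y n) < 1 / ((n : ℝ) + 1)) : VanishingPairs x y :=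
  ⟨hne, squeeze_zero (fun _ => dist_nonneg) (fun n => (hdist n).le)
    tendsto_one_div_add_atTop_nhds_zero_nat⟩

theorem uniformContinuous_iff_forall_vanishingPairs {Y : Type*} [PseudoMetricSpace Y]
    {f : X → Y} :
    UniformContinuous f ↔ ∀ x y : ℕ → X, VanishingPairs x y →
      Tendsto (fun n => dist (f (x n)) (f (y n))) atTop (𝓝 0) := by
  refine ⟨fun hf x y hxy => ?_, fun hlim => ?_⟩
  · exact tendsto_uniformity_iff_dist_tendsto_zero.1 (Tendsto.comp hf
      (tendsto_uniformity_iff_dist_tendsto_zero (f := fun n => (x n, y n)).2 hxy.tendsto_dist))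
  · by_contra hf
    rw [Metric.uniformContinuous_iff] at hf
    push Not at hf
    obtain ⟨ε, hε, hf⟩ := hf
    choose x y hdist hfar using fun n : ℕ => hf (1 / ((n : ℝ) + 1)) Nat.one_div_pos_of_nat
    have hne (n : ℕ) : x n ≠ y n := fun heq => by
      have hle := hfar n
      rw [heq, dist_self] at hle
      exact hε.not_ge hle
    obtain ⟨n, hn⟩ := ((hlim x y (.of_dist_lt hne hdist)).eventually_lt_const hε).exists
    exact (hfar n).not_gt hn

theorem VanishingPairs.exists_forall_abs_le {x y : ℕ → X} (hxy : VanishingPairs x y) {f : X → ℝ}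
    (hf : ∀ h : boundedUniformContinuous X, UniformContinuous fun z => f z * h.1 z) :
    ∃ C, ∀ n, |f (x n)| ≤ C := by
  let T (n : ℕ) : boundedUniformContinuous X →L[ℝ] ℝ :=
    (f (x n) • BoundedContinuousFunction.evalCLM ℝ (x n) -
      f (y n) • BoundedContinuousFunction.evalCLM ℝ (y n)) ∘L Submodule.subtypeL _
  have T_apply (n : ℕ) (h : boundedUniformContinuous X) :
      T n h = f (x n) * h.1 (x n) - f (y n) * h.1 (y n) := rfl
  have pointwise_bounded (h : boundedUniformContinuous X) : ∃ C, ∀ n, ‖T n h‖ ≤ C := by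
    obtain ⟨C, hC⟩ := (uniformContinuous_iff_forall_vanishingPairs.1 (hf h) x y hxy).bddAbove_range
    exact ⟨C, fun n => hC ⟨n, rfl⟩⟩
  obtain ⟨C, hC⟩ : ∃ C, ∀ n, ‖T n‖ ≤ C := banach_steinhaus pointwise_bounded
  refine ⟨C, fun n => ?_⟩
  obtain ⟨h, hnorm, hx, hy⟩ :=
    exists_boundedUniformContinuous_eq_one_eq_zero (dist_ne_zero.2 (hxy.ne n))
  calc |f (x n)| = ‖T n h‖ := by rw [T_apply, hx, hy, mul_one, mul_zero, sub_zero, Real.norm_eq_abs]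
    _ ≤ ‖T n‖ := (T n).unit_le_opNorm h hnorm
    _ ≤ C := hC n

theorem BourbakiBounded.isBoundedUnder_norm {ι : Type*} {x : ι → X} (hx : BourbakiBounded (range x))
    {f : X → ℝ} (hf : UniformContinuous f) (l : Filter ι) :
    IsBoundedUnder (· ≤ ·) l (norm ∘ f ∘ x) := by
  obtain ⟨M, hM⟩ := hx f hf
  exact isBoundedUnder_of ⟨M, fun n => hM (x n) (mem_range_self n)⟩

theorem isRingUC_iff_forall_vanishingPairs :
    IsRingUC X ↔ ∀ x y : ℕ → X, VanishingPairs x y → BourbakiBounded (range x) := by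
  refine ⟨fun hring x y hxy f hf => ?_, fun hbdd f g hf hg => ?_⟩
  · simpa only [forall_mem_range] using hxy.exists_forall_abs_le fun h => hring f h.1 hf h.2
  · refine uniformContinuous_iff_forall_vanishingPairs.2 fun x y hxy => ?_
    have hx := hbdd x y hxy
    have tendsto_sub {u : X → ℝ} (hu : UniformContinuous u) :
        Tendsto (fun n => u (x n) - u (y n)) atTop (𝓝 0) :=
      tendsto_zero_iff_norm_tendsto_zero.2
        (uniformContinuous_iff_forall_vanishingPairs.1 hu x y hxy)
    exact tendsto_zero_iff_norm_tendsto_zero.1 (tendsto_mul_sub_mul_zero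
      (hx.isBoundedUnder_norm hf _) (hx.isBoundedUnder_norm hg _) (tendsto_sub hf) (tendsto_sub hg))

theorem VanishingPairs.finite_of_unifIsolated {x y : ℕ → X} (hxy : VanishingPairs x y) {B : Set X}
    (hBx : B ⊆ range x) (hB : UnifIsolated B) : B.Finite := by
  obtain ⟨ε, hε, hball⟩ := hB
  obtain ⟨N, hN⟩ := eventually_atTop.1 (hxy.tendsto_dist.eventually_lt_const hε)
  refine ((finite_Iio N).image x).subset fun z hz => ?_
  obtain ⟨n, rfl⟩ := hBx hz
  refine ⟨n, mem_Iio.2 (lt_of_not_ge fun hNn => hxy.ne n ?_), rfl⟩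
  have hy : y n ∈ Metric.ball (x n) ε := Metric.mem_ball'.2 (hN n hNn)
  rw [hball _ hz] at hy
  exact hy.symm

theorem exists_ne_dist_lt_abs_gt {A : Set X} (hA : ∀ B ⊆ A, UnifIsolated B → B.Finite)
    {f : X → ℝ} (hf : ∀ M, ∃ x ∈ A, M < |f x|) {ε : ℝ} (hε : 0 < ε) (M : ℝ) :
    ∃ x ∈ A, ∃ y, x ≠ y ∧ dist x y < ε ∧ M < |f x| := by
  have hfin : {x ∈ A | Metric.ball x ε = {x}}.Finite :=
    hA _ (sep_subset _ _) ⟨ε, hε, fun _ hx => hx.2⟩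
  obtain ⟨C, hC⟩ := (hfin.image fun x => |f x|).bddAbove
  obtain ⟨x, hxA, hx⟩ := hf (max M C)
  obtain ⟨hMx, hCx⟩ := max_lt_iff.1 hx
  have hball : Metric.ball x ε ≠ {x} := fun hball =>
    hCx.not_ge (hC (mem_image_of_mem _ ⟨hxA, hball⟩))
  have hnontrivial : (Metric.ball x ε).Nontrivial :=
    (eq_singleton_or_nontrivial (Metric.mem_ball_self hε)).resolve_left hball
  obtain ⟨y, hy, hyx⟩ := hnontrivial.exists_ne x
  exact ⟨x, hxA, y, hyx.symm, Metric.mem_ball'.1 hy, hMx⟩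

theorem exists_vanishingPairs_of_not_bourbakiBounded {A : Set X} (hA : ¬ BourbakiBounded A)
    (hfin : ∀ B ⊆ A, UnifIsolated B → B.Finite) :
    ∃ x y : ℕ → X, VanishingPairs x y ∧ ¬ BourbakiBounded (range x) := by
  unfold BourbakiBounded at hA
  push Not at hA
  obtain ⟨f, hf, hunbdd⟩ := hA
  choose x _ y hne hdist hlarge using fun n : ℕ =>
    exists_ne_dist_lt_abs_gt hfin hunbdd (Nat.one_div_pos_of_nat (n := n)) n
  refine ⟨x, y, .of_dist_lt hne hdist, fun hbdd => ?_⟩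
  obtain ⟨M, hM⟩ := hbdd f hf
  obtain ⟨n, hn⟩ := exists_nat_gt M
  exact (hM (x n) (mem_range_self n)).not_gt (hn.trans (hlarge n))

theorem forall_vanishingPairs_bourbakiBounded_iff :
    (∀ x y : ℕ → X, VanishingPairs x y → BourbakiBounded (range x)) ↔
      ∀ A : Set X, ¬ BourbakiBounded A → ∃ B ⊆ A, B.Infinite ∧ UnifIsolated B := by
  refine ⟨fun hbdd A hA => ?_, fun hisol x y hxy => ?_⟩
  · by_contra! hfin
    obtain ⟨x, y, hxy, hx⟩ := exists_vanishingPairs_of_not_bourbakiBounded hA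
      fun B hBA hB => not_infinite.1 fun hinf => hfin B hBA hinf hB
    exact hx (hbdd x y hxy)
  · by_contra hx
    obtain ⟨B, hBx, hinf, hB⟩ := hisol _ hx
    exact hinf (hxy.finite_of_unifIsolated hBx hB)

end VanishingPairs

theorem stmt0 {X : Type*} [MetricSpace X] :
    IsRingUC X ↔
      ∀ A : Set X, ¬ BourbakiBounded A →
        ∃ B ⊆ A, B.Infinite ∧ UnifIsolated B :=
  isRingUC_iff_forall_vanishingPairs.trans forall_vanishingPairs_bourbakiBounded_iff
end

section
/- Let (X,d) be a metric space. Then U(X) is a ring if and only if for every uniformly continuous function f : X → ℝ there exists k ≥ 0 such that the set {x ∈ X : |f(x)| ≥ k} is uniformly isolated. -/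
/-!
If `{x | k ≤ ‖(f x, g x)‖}` is uniformly isolated, only its complement matters for the uniform
continuity of `f * g`; there `(f, g)` takes values in a compact set, on which multiplication is
uniformly continuous.

Conversely, if no set `{x | k ≤ f x}` is uniformly isolated, there are pairs `x n ≠ y n` with
`dist (x n) (y n) → 0` and `f (x n)` growing so fast that the points `x n` have pairwise disjoint
balls of a common radius and `∑ (f (x n))⁻¹` converges. Tents of height `(f (x n))⁻¹` centred at
`x n` and vanishing at `y n` add up to a uniformly continuous `g` for which `f * g` is `1` at every
`x n` and `0` at every `y n`.
-/

open Filter Metric Set Topology Uniformity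

section UnifIsolated

variable {X : Type*} [MetricSpace X] {A : Set X}

theorem unifIsolated_iff :
    UnifIsolated A ↔ ∃ ε > 0, ∀ x ∈ A, ∀ y, dist x y < ε → x = y := by
  refine exists_congr fun ε => and_congr_right fun hε => forall₂_congr fun x _ => ?_
  rw [eq_singleton_iff_unique_mem, and_iff_right (mem_ball_self hε)]
  simp only [mem_ball', eq_comm]

theorem UnifIsolated.mono {B : Set X} (hA : UnifIsolated A) (hBA : B ⊆ A) : UnifIsolated B :=
  hA.imp fun _ => And.imp_right fun hisol x hx => hisol x (hBA hx)

theorem UnifIsolated.uniformContinuous_of_uniformContinuousOn_compl {β : Type*} [UniformSpace β]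
    {f : X → β} (hA : UnifIsolated A) (hf : UniformContinuousOn f Aᶜ) : UniformContinuous f := by
  obtain ⟨ε, hε, hisol⟩ := unifIsolated_iff.1 hA
  intro V hV
  change ∀ᶠ p in 𝓤 X, (f p.1, f p.2) ∈ V
  filter_upwards [mem_inf_principal.1 (hf hV), dist_mem_uniformity hε] with ⟨a, b⟩ hmem hab
  by_cases hne : a = b
  · subst hne
    exact refl_mem_uniformity hV
  · exact hmem ⟨fun ha => hne (hisol a ha b hab),
      fun hb => hne (hisol b hb a (by rwa [dist_comm])).symm⟩

theorem UnifIsolated.uniformContinuous_comp {E β : Type*} [SeminormedAddCommGroup E]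
    [ProperSpace E] [UniformSpace β] {f : X → E} {φ : E → β} {k : ℝ}
    (hk : UnifIsolated {x | k ≤ ‖f x‖}) (hf : UniformContinuous f) (hφ : Continuous φ) :
    UniformContinuous (φ ∘ f) := by
  have hφ_ball : UniformContinuousOn φ (closedBall 0 k) :=
    (isCompact_closedBall 0 k).uniformContinuousOn_of_continuous hφ.continuousOn
  refine hk.uniformContinuous_of_uniformContinuousOn_compl
    (hφ_ball.comp hf.uniformContinuousOn ?_)
  exact fun x (hx : ¬ k ≤ ‖f x‖) => mem_closedBall_zero_iff.2 (le_of_not_ge hx)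

theorem isRingUC_of_forall_exists_unifIsolated
    (h : ∀ f : X → ℝ, UniformContinuous f → ∃ k, UnifIsolated {x | k ≤ f x}) :
    IsRingUC X := by
  intro f g hf hg
  obtain ⟨k, hk⟩ := h (fun x => ‖(f x, g x)‖) (uniformContinuous_norm.comp (hf.prodMk hg))
  exact hk.uniformContinuous_comp (hf.prodMk hg) continuous_mul

end UnifIsolated

theorem uniformContinuous_tsum {ι X F : Type*} [UniformSpace X] [NormedAddCommGroup F]
    [CompleteSpace F] {f : ι → X → F} {u : ι → ℝ} (hf : ∀ i, UniformContinuous (f i))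
    (hu : Summable u) (hfu : ∀ i x, ‖f i x‖ ≤ u i) :
    UniformContinuous fun x => ∑' i, f i x :=
  (tendstoUniformly_tsum hu hfu).uniformContinuous <|
    .of_forall fun s => s.uniformContinuous_sum fun i _ => hf i

theorem exists_strictMono_forall_lt_le {α : Type*} [Preorder α] {a : ℕ → α}
    (ha : Tendsto a atTop atTop) (b : ℕ → α) {p : ℕ → Prop} (hp : ∀ᶠ n in atTop, p n) :
    ∃ φ : ℕ → ℕ, StrictMono φ ∧ (∀ n, p (φ n)) ∧ ∀ m n, m < n → b (φ m) ≤ a (φ n) := by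
  obtain ⟨φ, hpφ, hφ⟩ := exists_seq_of_forall_finset_exists p
    (fun m n => m < n ∧ b m ≤ a n) fun s _ => by
      have hlarge : ∀ᶠ n in atTop, ∀ m ∈ s, m < n ∧ b m ≤ a n :=
        (eventually_all_finset s).2 fun m _ =>
          (eventually_gt_atTop m).and (ha.eventually_ge_atTop (b m))
      exact (hp.and hlarge).exists
  exact ⟨φ, fun m n hmn => (hφ m n hmn).1, hpφ, fun m n hmn => (hφ m n hmn).2⟩

theorem exists_strictMono_pairwise_le_dist_and_summable_inv {a : ℕ → ℝ}
    (ha : Tendsto a atTop atTop) (c : ℝ) {p : ℕ → Prop} (hp : ∀ᶠ n in atTop, p n) :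
    ∃ φ : ℕ → ℕ, StrictMono φ ∧ (∀ n, p (φ n)) ∧
      Pairwise (fun m n => c ≤ dist (a (φ m)) (a (φ n))) ∧ Summable fun n => (a (φ n))⁻¹ := by
  obtain ⟨φ, hφ, hpφ, hgrow⟩ := exists_strictMono_forall_lt_le ha
    (fun m => max (a m + c) (2 * a m)) (hp.and (ha.eventually_ge_atTop 1))
  have hgap m n (hmn : m < n) : c ≤ dist (a (φ m)) (a (φ n)) := by
    rw [dist_comm, Real.dist_eq]
    exact (le_sub_iff_add_le'.2 ((le_max_left _ _).trans (hgrow m n hmn))).trans (le_abs_self _)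
  have hpow n : 2 ^ n ≤ a (φ n) :=
    calc (2 : ℝ) ^ n ≤ 2 ^ n * a (φ 0) := le_mul_of_one_le_right (by positivity) (hpφ 0).2
      _ ≤ a (φ n) := geom_le zero_le_two n fun k _ =>
          (le_max_right _ _).trans (hgrow k (k + 1) k.lt_succ_self)
  refine ⟨φ, hφ, fun n => (hpφ n).1, fun m n hmn => ?_, ?_⟩
  · obtain hlt | hgt := hmn.lt_or_gt
    · exact hgap m n hlt
    · exact dist_comm (a (φ n)) (a (φ m)) ▸ hgap n m hgt
  · refine summable_geometric_two.of_nonneg_of_le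
      (fun n => inv_nonneg.2 (zero_le_one.trans (hpφ n).2)) fun n => ?_
    rw [one_div, inv_pow]
    exact inv_anti₀ (by positivity) (hpow n)

theorem exists_uniformContinuous_eq_and_eq_zero {ι X : Type*} [PseudoMetricSpace X]
    {x y : ι → X} {δ : ι → ℝ}
    (hdisj : Pairwise fun i j => Disjoint (ball (x i) (δ i)) (ball (x j) (δ j)))
    (hpos : ∀ i, 0 < dist (x i) (y i)) (hlt : ∀ i, dist (x i) (y i) < δ i)
    {h : ι → ℝ} (hh : Summable h) :
    ∃ g : X → ℝ, UniformContinuous g ∧ (∀ i, g (x i) = h i) ∧ ∀ i, g (y i) = 0 := by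
  let tent (i : ι) (z : X) : ℝ := thickenedIndicator (hpos i) {x i} z
  have tent_uc i : UniformContinuous (tent i) :=
    uniformContinuous_subtype_val.comp
      (lipschitzWith_thickenedIndicator (hpos i) {x i}).uniformContinuous
  have tent_self i : tent i (x i) = 1 :=
    congrArg NNReal.toReal (thickenedIndicator_one (hpos i) {x i} rfl)
  have tent_zero {i z} (hz : z ∉ ball (x i) (dist (x i) (y i))) : tent i z = 0 :=
    congrArg NNReal.toReal <|
      thickenedIndicator_zero (hpos i) {x i} (by rwa [thickening_singleton])
  have tent_zero_of_ne {i j z} (hij : i ≠ j) (hz : z ∈ ball (x j) (δ j)) : tent i z = 0 :=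
    tent_zero fun hzi => disjoint_left.1 (hdisj hij) (ball_subset_ball (hlt i).le hzi) hz
  refine ⟨fun z => ∑' i, h i * tent i z, ?_, fun j => ?_, fun j => ?_⟩
  · refine uniformContinuous_tsum (fun i => (tent_uc i).const_mul' (h i)) hh.norm fun i z => ?_
    rw [norm_mul, NNReal.norm_eq]
    exact mul_le_of_le_one_right (norm_nonneg _) (thickenedIndicator_le_one (hpos i) {x i} z)
  · have hx : x j ∈ ball (x j) (δ j) := mem_ball_self ((hpos j).trans (hlt j))
    have hoff i (hij : i ≠ j) : h i * tent i (x j) = 0 := by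
      rw [tent_zero_of_ne hij hx, mul_zero]
    exact (tsum_eq_single j hoff).trans (by rw [tent_self, mul_one])
  · have hy i : tent i (y j) = 0 := by
      obtain rfl | hij := eq_or_ne i j
      · exact tent_zero (by simp [dist_comm])
      · exact tent_zero_of_ne hij (mem_ball'.2 (hlt j))
    simp only [hy, mul_zero, tsum_zero]

theorem disjoint_ball_of_add_le_dist_apply {X Y : Type*} [PseudoMetricSpace X]
    [PseudoMetricSpace Y] {f : X → Y} {δ η : ℝ}
    (hf : ∀ ⦃a b⦄, dist a b < δ → dist (f a) (f b) < η) {a b : X}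
    (hab : η + η ≤ dist (f a) (f b)) : Disjoint (ball a δ) (ball b δ) :=
  disjoint_left.2 fun z hza hzb => hab.not_gt <|
    (dist_triangle_left _ _ (f z)).trans_lt (add_lt_add (hf hza) (hf hzb))

section IsRingUC

variable {X : Type*} [MetricSpace X] {f : X → ℝ}

theorem exists_seq_tendsto_dist_of_forall_not_unifIsolated
    (hf : ∀ k, ¬ UnifIsolated {x | k ≤ f x}) :
    ∃ x y : ℕ → X, (∀ n, x n ≠ y n) ∧ Tendsto (fun n => dist (x n) (y n)) atTop (𝓝 0) ∧
      Tendsto (f ∘ x) atTop atTop := by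
  have hpair (n : ℕ) : ∃ x y, n ≤ f x ∧ dist x y < 1 / (n + 1 : ℝ) ∧ x ≠ y := by
    by_contra! hisol
    exact hf n (unifIsolated_iff.2 ⟨1 / (n + 1), Nat.one_div_pos_of_nat,
      fun x hx y hxy => hisol x y hx hxy⟩)
  choose x y hx hdist hne using hpair
  exact ⟨x, y, hne, squeeze_zero (fun _ => dist_nonneg) (fun n => (hdist n).le)
    tendsto_one_div_add_atTop_nhds_zero_nat, tendsto_atTop_mono hx tendsto_natCast_atTop_atTop⟩

theorem IsRingUC.exists_unifIsolated (hX : IsRingUC X) (hf : UniformContinuous f) :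
    ∃ k, UnifIsolated {x | k ≤ f x} := by
  by_contra! hnot
  obtain ⟨x, y, hne, hdist, hfx⟩ := exists_seq_tendsto_dist_of_forall_not_unifIsolated hnot
  obtain ⟨δ, hδ, hfδ⟩ := Metric.uniformContinuous_iff.1 hf 1 one_pos
  obtain ⟨φ, hφ, hφ_good, hsep, hsum⟩ := exists_strictMono_pairwise_le_dist_and_summable_inv hfx
    (1 + 1) ((hdist.eventually_lt_const hδ).and (hfx.eventually_gt_atTop 0))
  obtain ⟨g, hg, hgx, hgy⟩ := exists_uniformContinuous_eq_and_eq_zero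
    (fun m n hmn => disjoint_ball_of_add_le_dist_apply hfδ (hsep hmn))
    (fun n => dist_pos.2 (hne (φ n))) (fun n => (hφ_good n).1) hsum
  have hfgx n : f (x (φ n)) * g (x (φ n)) = 1 := by
    rw [hgx]
    exact mul_inv_cancel₀ (hφ_good n).2.ne'
  have hfgy n : f (y (φ n)) * g (y (φ n)) = 0 := by rw [hgy, mul_zero]
  obtain ⟨η, hη, hfgη⟩ := Metric.uniformContinuous_iff.1 (hX f g hf hg) 1 one_pos
  obtain ⟨n, hn⟩ := ((hdist.comp hφ.tendsto_atTop).eventually_lt_const hη).exists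
  have hclose := hfgη hn
  rw [hfgx, hfgy, dist_zero_right, norm_one] at hclose
  exact hclose.false

end IsRingUC

theorem stmt1 {X : Type*} [MetricSpace X] :
    IsRingUC X ↔
      ∀ f : X → ℝ, UniformContinuous f →
        ∃ k : ℝ, 0 ≤ k ∧ UnifIsolated {x : X | k ≤ |f x|} := by
  refine ⟨fun hX f hf => ?_, fun h => isRingUC_of_forall_exists_unifIsolated fun f hf => ?_⟩
  · obtain ⟨k, hk⟩ := hX.exists_unifIsolated (uniformContinuous_norm.comp hf)
    exact ⟨max k 0, le_max_right k 0, hk.mono fun x hx => (le_max_left k 0).trans hx⟩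
  · obtain ⟨k, -, hk⟩ := h f hf
    exact ⟨k, hk.mono fun x hx => hx.trans (le_abs_self (f x))⟩
end

section
/- Let (X,𝒰) be a uniform space, let f : X → ℝ be uniformly continuous and let g : ℝ → ℝ be continuous. Suppose that for each symmetric entourage U ∈ 𝒰 there exist a set B ⊆ X and n ∈ ℕ such that f(B) is a bounded subset of ℝ and the restriction of g ∘ f to X \ Uⁿ[B] is uniformly continuous. Then g ∘ f is uniformly continuous on X. -/
/-- A relation is symmetric: `(x,y) ∈ U ↔ (y,x) ∈ U`. -/
def SymmRel {X : Type*} (U : Set (X × X)) : Prop :=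
  ∀ x y : X, (x, y) ∈ U ↔ (y, x) ∈ U

/-- The image `U[A] = ⋃ x ∈ A, U[x]` of a set under a relation. -/
def relImage {X : Type*} (U : Set (X × X)) (A : Set X) : Set X :=
  ⋃ x ∈ A, UniformSpace.ball x U

/-- `relIter U n` is the `(n+1)`-fold composition `Uⁿ⁺¹ = U ∘ ⋯ ∘ U`;
so as `n` ranges over `ℕ`, all positive powers `Uⁿ` occur. -/
def relIter {X : Type*} (U : Set (X × X)) : ℕ → Set (X × X)
  | 0 => U
  | n + 1 => SetRel.comp U (relIter U n)

/-!
Apply the hypothesis to the entourage `U = {(x, y) | dist (f x) (f y) < 1}`. Each application of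
`U[·]` enlarges the image under `f` by a bounded amount, so `f` is bounded on `S = Uⁿ[B]` and still
on `U[S]`; there `g ∘ f` is uniformly continuous because `g` is so on compact sets. As it is also
uniformly continuous off `S`, and two `U`-close points lie both in `U[S]` or both off `S`, the two
pieces glue.
-/

open Bornology Set
open scoped Uniformity

section Relation

variable {X : Type*} {U V : Set (X × X)} {A : Set X}

theorem mem_relImage {y : X} : y ∈ relImage U A ↔ ∃ x ∈ A, (x, y) ∈ U := by
  simp only [relImage, mem_iUnion, exists_prop, UniformSpace.ball, mem_preimage]

theorem relImage_comp : relImage (SetRel.comp U V) A = relImage V (relImage U A) := by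
  ext z
  simp only [mem_relImage, SetRel.mem_comp]
  tauto

end Relation

section Bounded

variable {X Y : Type*} [PseudoMetricSpace Y] {f : X → Y} {U : Set (X × X)} {A : Set X} {C : ℝ}

theorem isBounded_image_relImage (hU : ∀ p ∈ U, dist (f p.1) (f p.2) ≤ C)
    (hA : IsBounded (f '' A)) : IsBounded (f '' relImage U A) := by
  refine (hA.cthickening (δ := C)).subset (image_subset_iff.2 fun y hy => ?_)
  obtain ⟨x, hxA, hxy⟩ := mem_relImage.1 hy
  exact Metric.mem_cthickening_of_dist_le _ (f x) _ _ (mem_image_of_mem f hxA)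
    (dist_comm (f y) (f x) ▸ hU _ hxy)

theorem isBounded_image_relImage_relIter (hU : ∀ p ∈ U, dist (f p.1) (f p.2) ≤ C)
    (hA : IsBounded (f '' A)) (n : ℕ) : IsBounded (f '' relImage (relIter U n) A) := by
  induction n generalizing A with
  | zero => exact isBounded_image_relImage hU hA
  | succ n ih =>
    rw [relIter, relImage_comp]
    exact ih (isBounded_image_relImage hU hA)

end Bounded

section UniformContinuity

variable {X Y Z : Type*} [UniformSpace X] [UniformSpace Z]

theorem uniformContinuous_of_uniformContinuousOn_compl_of_relImage {φ : X → Z} {S : Set X}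
    {U : Set (X × X)} (hU : U ∈ 𝓤 X) (hcompl : UniformContinuousOn φ Sᶜ)
    (himage : UniformContinuousOn φ (relImage U S)) : UniformContinuous φ := by
  have subset_image : S ⊆ relImage U S := fun x hx =>
    mem_relImage.2 ⟨x, hx, refl_mem_uniformity hU⟩
  intro W hW
  have hcompl_near := Filter.mem_inf_principal.1 (hcompl hW)
  have himage_near := Filter.mem_inf_principal.1 (himage hW)
  rw [Filter.mem_map]
  filter_upwards [hcompl_near, himage_near, hU, symm_le_uniformity hU]
    with ⟨x, y⟩ hoff hon hxy hyx
  by_cases hx : x ∈ S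
  · exact hon ⟨subset_image hx, mem_relImage.2 ⟨x, hx, hxy⟩⟩
  by_cases hy : y ∈ S
  · exact hon ⟨mem_relImage.2 ⟨y, hy, hyx⟩, subset_image hy⟩
  exact hoff ⟨hx, hy⟩

variable [PseudoMetricSpace Y] [ProperSpace Y] {f : X → Y} {g : Y → Z}

theorem uniformContinuousOn_comp_of_isBounded_image {T : Set X} (hf : UniformContinuousOn f T)
    (hg : Continuous g) (hT : IsBounded (f '' T)) : UniformContinuousOn (g ∘ f) T :=
  (hT.isCompact_closure.uniformContinuousOn_of_continuous hg.continuousOn).comp hf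
    fun _ hx => subset_closure (mem_image_of_mem f hx)

theorem stmt6_general (hf : UniformContinuous f) (hg : Continuous g)
    (h : ∀ U ∈ 𝓤 X, SymmRel U → ∃ (B : Set X) (n : ℕ), IsBounded (f '' B) ∧
      UniformContinuousOn (g ∘ f) (univ \ relImage (relIter U n) B)) :
    UniformContinuous (g ∘ f) := by
  let U : Set (X × X) := {p | dist (f p.1) (f p.2) < 1}
  have hU : U ∈ 𝓤 X := hf (Metric.dist_mem_uniformity one_pos)
  have hU_symm : SymmRel U := fun x y => by simp only [U, mem_ofPred_eq, dist_comm]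
  have hU_dist : ∀ p ∈ U, dist (f p.1) (f p.2) ≤ 1 := fun _ hp => hp.le
  obtain ⟨B, n, hB, hoff⟩ := h U hU hU_symm
  rw [← compl_eq_univ_sdiff] at hoff
  have hbounded : IsBounded (f '' relImage U (relImage (relIter U n) B)) :=
    isBounded_image_relImage hU_dist (isBounded_image_relImage_relIter hU_dist hB n)
  exact uniformContinuous_of_uniformContinuousOn_compl_of_relImage hU hoff
    (uniformContinuousOn_comp_of_isBounded_image hf.uniformContinuousOn hg hbounded)

end UniformContinuity

theorem stmt6 {X : Type*} [UniformSpace X] (f : X → ℝ) (g : ℝ → ℝ)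
    (hf : UniformContinuous f) (hg : Continuous g)
    (h : ∀ U ∈ uniformity X, SymmRel U →
      ∃ (B : Set X) (n : ℕ), Bornology.IsBounded (f '' B) ∧
        UniformContinuousOn (g ∘ f) (Set.univ \ relImage (relIter U n) B)) :
    UniformContinuous (g ∘ f) :=
  stmt6_general hf hg h
end

section
/- Let (Y,d) be a metric space and X a dense subset of Y. If every subset of the metric subspace (X,d) that is Bourbaki bounded in X is totally bounded, then every subset of (Y,d) that is Bourbaki bounded in Y is totally bounded. -/
/-!
Total boundedness can be tested on sequences. A sequence in a Bourbaki bounded subset of `Y` is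
asymptotic to a sequence in the dense subspace `X`, and both Bourbaki boundedness and total
boundedness of the range pass between asymptotic sequences. Bourbaki boundedness in `Y` of a subset
of `X` gives Bourbaki boundedness in `X`, because uniformly continuous real functions on `X` extend
to `Y`.
-/

open Set Filter Topology Uniformity

section UniformSpace

variable {ι X Y : Type*} [UniformSpace Y]

theorem totallyBounded_of_forall_seq {s : Set Y}
    (h : ∀ u : ℕ → Y, (∀ n, u n ∈ s) → TotallyBounded (range u)) : TotallyBounded s := by
  intro V hV
  by_contra! hcover
  obtain ⟨u, hus, hsep⟩ : ∃ u : ℕ → Y, (∀ n, u n ∈ s) ∧ ∀ m n, m < n → (u n, u m) ∉ V := by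
    refine exists_seq_of_forall_finset_exists (· ∈ s) (fun x y ↦ (y, x) ∉ V) fun t _ ↦ ?_
    simpa [not_subset] using hcover t t.finite_toSet
  obtain ⟨F, -, hF_fin, hF_cover⟩ := exists_subset_image_finite_and.1 <|
    image_univ (f := u) ▸ (h u hus).exists_subset hV
  obtain ⟨N, hN⟩ := hF_fin.bddAbove
  obtain ⟨m, hm, hmN⟩ : ∃ m ∈ F, (u (N + 1), u m) ∈ V := by
    simpa using hF_cover (mem_image_of_mem u (mem_univ (N + 1)))
  exact hsep m (N + 1) (Nat.lt_succ_of_le (hN hm)) hmN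

theorem totallyBounded_range_of_tendsto_uniformity {x y : ι → Y}
    (hxy : Tendsto (fun i ↦ (x i, y i)) cofinite (𝓤 Y)) (hy : TotallyBounded (range y)) :
    TotallyBounded (range x) := by
  intro V hV
  obtain ⟨W, hW, hWV⟩ := comp_mem_uniformity_sets hV
  obtain ⟨t, ht_fin, ht_cover⟩ := hy W hW
  have hfar : {i | (x i, y i) ∉ W}.Finite := hxy hW
  refine ⟨t ∪ x '' {i | (x i, y i) ∉ W}, ht_fin.union (hfar.image x), ?_⟩
  rintro _ ⟨i, rfl⟩
  by_cases hi : (x i, y i) ∈ W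
  · obtain ⟨c, hct, hc⟩ := mem_iUnion₂.1 (ht_cover (mem_range_self i))
    exact mem_iUnion₂.2 ⟨c, .inl hct, hWV ⟨y i, hi, hc⟩⟩
  · exact mem_iUnion₂.2 ⟨x i, .inr (mem_image_of_mem x hi), refl_mem_uniformity hV⟩

theorem exists_seq_tendsto_uniformity_of_denseRange [(𝓤 Y).IsCountablyGenerated] {e : X → Y}
    (he : DenseRange e) (y : ℕ → Y) :
    ∃ x : ℕ → X, Tendsto (fun n ↦ (y n, e (x n))) atTop (𝓤 Y) := by
  obtain ⟨V, hV⟩ := (𝓤 Y).exists_antitone_basis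
  choose x hx using fun n ↦ he.mem_nhds (UniformSpace.ball_mem_nhds (y n) (hV.mem n))
  exact ⟨x, hV.tendsto hx⟩

end UniformSpace

namespace BourbakiBounded

variable {ι X Y : Type*} [MetricSpace X] [MetricSpace Y]

theorem mono {A B : Set Y} (hB : BourbakiBounded B) (hAB : A ⊆ B) : BourbakiBounded A :=
  fun f hf ↦ (hB f hf).imp fun _ hM x hx ↦ hM x (hAB hx)

theorem range_of_tendsto_uniformity {x y : ι → Y}
    (hxy : Tendsto (fun i ↦ (x i, y i)) cofinite (𝓤 Y)) (hx : BourbakiBounded (range x)) :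
    BourbakiBounded (range y) := by
  intro f hf
  obtain ⟨M, hM⟩ := hx f hf
  have hdist : Tendsto (fun i ↦ dist (f (x i)) (f (y i))) cofinite (𝓝 0) :=
    tendsto_uniformity_iff_dist_tendsto_zero.1 (Tendsto.comp hf hxy)
  obtain ⟨C, hC⟩ := hdist.bddAbove_range_of_cofinite
  refine ⟨M + C, forall_mem_range.2 fun i ↦ ?_⟩
  calc |f (y i)| ≤ |f (x i)| + |f (x i) - f (y i)| := by
        linarith [abs_sub_abs_le_abs_sub (f (y i)) (f (x i)), abs_sub_comm (f (y i)) (f (x i))]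
    _ ≤ M + C := add_le_add (hM _ (mem_range_self i)) (hC (mem_range_self i))

theorem of_image {e : X → Y} (he : IsUniformInducing e) (hde : DenseRange e) {A : Set X}
    (hA : BourbakiBounded (e '' A)) : BourbakiBounded A := by
  intro f hf
  obtain ⟨M, hM⟩ := hA _ (uniformContinuous_uniformly_extend he hde hf)
  refine ⟨M, fun x hx ↦ ?_⟩
  simpa only [uniformly_extend_of_ind he hde hf] using hM (e x) (mem_image_of_mem e hx)

end BourbakiBounded

theorem stmt10_general {X Y : Type*} [MetricSpace X] [MetricSpace Y] {e : X → Y}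
    (he : IsUniformInducing e) (hde : DenseRange e)
    (h : ∀ A : Set X, BourbakiBounded A → TotallyBounded A) (B : Set Y) (hB : BourbakiBounded B) :
    TotallyBounded B := by
  refine totallyBounded_of_forall_seq fun y hyB ↦ ?_
  obtain ⟨x, hyx⟩ := exists_seq_tendsto_uniformity_of_denseRange hde y
  rw [← Nat.cofinite_eq_atTop] at hyx
  have hex : BourbakiBounded (range (e ∘ x)) :=
    (hB.mono (range_subset_iff.2 hyB)).range_of_tendsto_uniformity hyx
  have hx : TotallyBounded (range x) := h _ (.of_image he hde (range_comp e x ▸ hex))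
  have hex' : TotallyBounded (range (e ∘ x)) := range_comp e x ▸ hx.image he.uniformContinuous
  exact totallyBounded_range_of_tendsto_uniformity hyx hex'

theorem stmt10 {Y : Type*} [MetricSpace Y] (X : Set Y) (hX : Dense X)
    (h : ∀ A : Set X, BourbakiBounded A → TotallyBounded A) :
    ∀ B : Set Y, BourbakiBounded B → TotallyBounded B :=
  stmt10_general (isUniformInducing_val X) hX.denseRange_val h
end

section
/- Let (Y,d) be a metric space and X a dense subset of Y. Then there exists a totally bounded set K ⊆ Y such that for each ε > 0 the set Y \ B(K,ε) is uniformly isolated in Y, if and only if there exists a totally bounded set L ⊆ X such that for each ε > 0 the set X \ B_X(L,ε) is uniformly isolated in the metric subspace (X,d), where B_X(L,ε) is the ε-enlargement of L computed in X. -/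
/-- The open `ε`-enlargement `B(F,ε)` of a set `F`. -/
def enl {X : Type*} [MetricSpace X] (F : Set X) (ε : ℝ) : Set X :=
  ⋃ x ∈ F, Metric.ball x ε

/-!
For `X ⊆ Y` dense, a totally bounded `L ⊆ X` has the required property in `X` iff it has it in `Y`:
a uniformly isolated subset of `X` stays uniformly isolated in `Y`, is therefore closed there, and
by density every point of `Y \ B(L, ε)` is a limit of points of `X \ B(L, ε / 2)`. It remains to
replace a totally bounded `K ⊆ Y` by a totally bounded `L ⊆ X` with `K ⊆ closure L`, since then
`B(K, ε) ⊆ B(L, ε)`. For `L` one takes the union of finite subsets of `X` whose Hausdorff distances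
to `K` tend to `0`.
-/

open Metric Set

section TotallyBounded

variable {Y : Type*} [PseudoMetricSpace Y] {K X : Set Y}

theorem totallyBounded_of_forall_subset_thickening
    (h : ∀ ε > 0, ∃ T, TotallyBounded T ∧ K ⊆ thickening ε T) : TotallyBounded K := by
  refine totallyBounded_iff.2 fun ε hε => ?_
  obtain ⟨T, hT, hKT⟩ := h (ε / 2) (half_pos hε)
  obtain ⟨t, ht, hTt⟩ := totallyBounded_iff.1 hT (ε / 2) (half_pos hε)
  rw [← thickening_eq_biUnion_ball] at hTt
  refine ⟨t, ht, ?_⟩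
  calc K ⊆ thickening (ε / 2) (thickening (ε / 2) t) :=
        hKT.trans (thickening_subset_of_subset _ hTt)
    _ ⊆ thickening (ε / 2 + ε / 2) t := thickening_thickening_subset _ _ _
    _ = ⋃ y ∈ t, ball y ε := by rw [add_halves, thickening_eq_biUnion_ball]

theorem exists_finite_subset_thickening_of_dense (hK : TotallyBounded K) (hX : Dense X)
    {ε : ℝ} (hε : 0 < ε) :
    ∃ G ⊆ X, G.Finite ∧ G ⊆ thickening ε K ∧ K ⊆ thickening ε G := by
  obtain ⟨t, htK, ht, hKt⟩ := finite_approx_of_totallyBounded hK (ε / 2) (half_pos hε)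
  choose g hgX hg using fun y => hX.exists_dist_lt y (half_pos hε)
  refine ⟨g '' t, image_subset_iff.2 fun y _ => hgX y, ht.image g, ?_, fun k hk => ?_⟩
  · rintro _ ⟨y, hy, rfl⟩
    exact mem_thickening_iff.2 ⟨y, htK hy, by linarith [hg y, dist_comm y (g y)]⟩
  · obtain ⟨y, hy, hky⟩ := mem_iUnion₂.1 (hKt hk)
    rw [mem_ball] at hky
    exact mem_thickening_iff.2
      ⟨g y, mem_image_of_mem g hy, by linarith [hg y, dist_triangle k y (g y)]⟩

theorem totallyBounded_iUnion_of_subset_thickening (hK : TotallyBounded K) {G : ℕ → Set Y}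
    (hG : ∀ n, TotallyBounded (G n)) {u : ℕ → ℝ} (hu : Filter.Tendsto u .atTop (nhds 0))
    (hGK : ∀ n, G n ⊆ thickening (u n) K) : TotallyBounded (⋃ n, G n) := by
  refine totallyBounded_of_forall_subset_thickening fun ε hε => ?_
  obtain ⟨N, hN⟩ := Filter.eventually_atTop.1 (hu.eventually_lt_const hε)
  refine ⟨K ∪ ⋃ n ∈ Iio N, G n,
    hK.union ((totallyBounded_biUnion (finite_Iio N)).2 fun n _ => hG n),
    iUnion_subset fun n => ?_⟩
  rcases lt_or_ge n N with hn | hn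
  · have hGn : G n ⊆ ⋃ m ∈ Iio N, G m := subset_biUnion_of_mem (u := G) hn
    exact (hGn.trans subset_union_right).trans (self_subset_thickening hε _)
  · exact ((hGK n).trans (thickening_mono (hN n hn).le K)).trans
      (thickening_subset_of_subset ε subset_union_left)

theorem exists_totallyBounded_subset_closure_of_dense (hK : TotallyBounded K) (hX : Dense X) :
    ∃ L ⊆ X, TotallyBounded L ∧ K ⊆ closure L := by
  obtain ⟨u, -, hu_pos, hu⟩ := exists_seq_strictAnti_tendsto (0 : ℝ)
  choose G hGX hG hGK hKG using
    fun n => exists_finite_subset_thickening_of_dense hK hX (hu_pos n)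
  refine ⟨⋃ n, G n, iUnion_subset hGX,
    totallyBounded_iUnion_of_subset_thickening hK (fun n => (hG n).totallyBounded) hu hGK,
    fun k hk => Metric.mem_closure_iff.2 fun ε hε => ?_⟩
  obtain ⟨n, hn⟩ := (hu.eventually_lt_const hε).exists
  obtain ⟨g, hg, hkg⟩ := mem_thickening_iff.1 (hKG n hk)
  exact ⟨g, mem_iUnion_of_mem n hg, hkg.trans hn⟩

theorem exists_totallyBounded_subset_closure_image {X : Type*} [UniformSpace X]
    {f : X → Y} (hf : IsUniformInducing f) (hfd : DenseRange f) (hK : TotallyBounded K) :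
    ∃ L : Set X, TotallyBounded L ∧ K ⊆ closure (f '' L) := by
  obtain ⟨L, hLf, hL, hKL⟩ := exists_totallyBounded_subset_closure_of_dense hK hfd
  refine ⟨f ⁻¹' L, totallyBounded_preimage hf hL, ?_⟩
  rwa [image_preimage_eq_of_subset hLf]

end TotallyBounded

section Isometry

variable {X Y : Type*} [MetricSpace X] [MetricSpace Y] {f : X → Y}

theorem univ_sdiff_enl (F : Set X) (ε : ℝ) : univ \ enl F ε = (thickening ε F)ᶜ := by
  rw [enl, thickening_eq_biUnion_ball, compl_eq_univ_sdiff]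

theorem preimage_thickening_image_of_isometry (hf : Isometry f) (F : Set X) (ε : ℝ) :
    f ⁻¹' thickening ε (f '' F) = thickening ε F := by
  ext x
  simp only [mem_preimage, mem_thickening_iff_infEDist_lt, infEDist_image hf]

namespace UnifIsolated

variable {A B : Set X}

theorem mono_s11 (hB : UnifIsolated B) (hAB : A ⊆ B) : UnifIsolated A :=
  let ⟨δ, hδ, hball⟩ := hB
  ⟨δ, hδ, fun x hx => hball x (hAB hx)⟩

theorem isClosed (hA : UnifIsolated A) : IsClosed A := by
  obtain ⟨δ, hδ, hball⟩ := hA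
  refine isClosed_of_closure_subset fun y hy => ?_
  obtain ⟨x, hx, hyx⟩ := Metric.mem_closure_iff.1 hy δ hδ
  have hyx' : y ∈ ({x} : Set X) := hball x hx ▸ mem_ball.2 hyx
  rwa [mem_singleton_iff.1 hyx']

theorem preimage {A : Set Y} (hA : UnifIsolated A) (hf : Isometry f) :
    UnifIsolated (f ⁻¹' A) := by
  obtain ⟨δ, hδ, hball⟩ := hA
  refine ⟨δ, hδ, fun x hx => ?_⟩
  rw [← hf.preimage_ball, hball _ hx, ← image_singleton, hf.injective.preimage_image]

theorem image (hA : UnifIsolated A) (hf : Isometry f) (hfd : DenseRange f) :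
    UnifIsolated (f '' A) := by
  obtain ⟨δ, hδ, hball⟩ := hA
  refine ⟨δ, hδ, ?_⟩
  rintro _ ⟨x, hx, rfl⟩
  refine Subset.antisymm ?_ (singleton_subset_iff.2 (mem_ball_self hδ))
  calc ball (f x) δ ⊆ closure (ball (f x) δ ∩ range f) :=
        hfd.open_subset_closure_inter isOpen_ball
    _ = closure {f x} := by
        rw [← image_preimage_eq_inter_range, hf.preimage_ball, hball x hx, image_singleton]
    _ = {f x} := closure_singleton

end UnifIsolated

/-- `F` is a core of the space when the complement of each of its open enlargements is uniformly
isolated; both sides of the theorem assert that a totally bounded core exists. -/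
def IsUnifIsolatedCore (F : Set X) : Prop :=
  ∀ ε > (0 : ℝ), UnifIsolated (univ \ enl F ε)

namespace IsUnifIsolatedCore

theorem of_subset_closure {K L : Set X} (hK : IsUnifIsolatedCore K) (hKL : K ⊆ closure L) :
    IsUnifIsolatedCore L := by
  refine fun ε hε => (hK ε hε).mono_s11 ?_
  rw [univ_sdiff_enl, univ_sdiff_enl, compl_subset_compl, ← thickening_closure (s := L)]
  exact thickening_subset_of_subset ε hKL

theorem of_image {L : Set X} (hL : IsUnifIsolatedCore (f '' L)) (hf : Isometry f) :
    IsUnifIsolatedCore L := by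
  intro ε hε
  rw [univ_sdiff_enl, ← preimage_thickening_image_of_isometry hf, ← preimage_compl,
    ← univ_sdiff_enl]
  exact (hL ε hε).preimage hf

theorem image {L : Set X} (hL : IsUnifIsolatedCore L) (hf : Isometry f) (hfd : DenseRange f) :
    IsUnifIsolatedCore (f '' L) := by
  intro ε hε
  have hiso : UnifIsolated (f '' (thickening (ε / 2) L)ᶜ) :=
    (univ_sdiff_enl L (ε / 2) ▸ hL (ε / 2) (half_pos hε)).image hf hfd
  refine hiso.mono_s11 ?_
  rw [univ_sdiff_enl]
  calc (thickening ε (f '' L))ᶜ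
      ⊆ (cthickening (ε / 2) (f '' L))ᶜ :=
        compl_subset_compl.2 (cthickening_subset_thickening' hε (half_lt_self hε) _)
    _ ⊆ closure ((cthickening (ε / 2) (f '' L))ᶜ ∩ range f) :=
        hfd.open_subset_closure_inter isClosed_cthickening.isOpen_compl
    _ ⊆ closure ((thickening (ε / 2) (f '' L))ᶜ ∩ range f) := by
        gcongr
        exact thickening_subset_cthickening _ _
    _ = closure (f '' (thickening (ε / 2) L)ᶜ) := by
        rw [← image_preimage_eq_inter_range, preimage_compl,
          preimage_thickening_image_of_isometry hf]
    _ = f '' (thickening (ε / 2) L)ᶜ := hiso.isClosed.closure_eq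

end IsUnifIsolatedCore

end Isometry

theorem stmt11 {Y : Type*} [MetricSpace Y] (X : Set Y) (hX : Dense X) :
    (∃ K : Set Y, TotallyBounded K ∧
        ∀ ε > (0 : ℝ), UnifIsolated (Set.univ \ enl K ε)) ↔
      (∃ L : Set X, TotallyBounded L ∧
        ∀ ε > (0 : ℝ), UnifIsolated (Set.univ \ enl L ε)) := by
  have hisom : Isometry ((↑) : X → Y) := isometry_subtype_coe
  have hdense : DenseRange ((↑) : X → Y) := hX.denseRange_val
  constructor
  · rintro ⟨K, hK, hcore : IsUnifIsolatedCore K⟩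
    obtain ⟨L, hL, hKL⟩ :=
      exists_totallyBounded_subset_closure_image hisom.isUniformInducing hdense hK
    exact ⟨L, hL, (hcore.of_subset_closure hKL).of_image hisom⟩
  · rintro ⟨L, hL, hcore : IsUnifIsolatedCore L⟩
    exact ⟨(↑) '' L, hL.image hisom.uniformContinuous, hcore.image hisom hdense⟩
end

section
/- Let (X,d) be a metric space. Then U(X) is a ring if and only if for every pair of sequences (xₙ), (yₙ) in X with xₙ ≠ yₙ for all n and d(xₙ,yₙ) → 0, both sets {xₙ : n ∈ ℕ} and {yₙ : n ∈ ℕ} are Bourbaki bounded in X. -/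
/-!
Let `f` be uniformly continuous and let `x`, `y` be twin sequences. If `U(X)` is a ring, the
functionals `g ↦ f (x n) g (x n) - f (y n) g (y n)` on the Banach space of bounded uniformly
continuous functions tend to zero pointwise, so by Banach–Steinhaus their norms are bounded.
Since `x n ≠ y n`, testing on a function that vanishes at `y n` and attains its norm at `x n`
shows that the `n`-th norm is at least `|f (x n)|`.

Conversely, failure of uniform continuity of `f g` is witnessed by twin sequences, and along them
`f (x n) g (x n) - f (y n) g (y n) = f (x n) (g (x n) - g (y n)) + (f (x n) - f (y n)) g (y n)`
tends to zero as soon as `f (x n)` and `g (y n)` are bounded.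
-/

open Filter Topology Uniformity BoundedContinuousFunction

theorem uniformContinuous_of_forall_seq_ne {X Y : Type*} [UniformSpace X] [UniformSpace Y]
    [(𝓤 X).IsCountablyGenerated] {f : X → Y}
    (hf : ∀ x y : ℕ → X, (∀ n, x n ≠ y n) → Tendsto (fun n ↦ (x n, y n)) atTop (𝓤 X) →
      Tendsto (fun n ↦ (f (x n), f (y n))) atTop (𝓤 Y)) :
    UniformContinuous f := by
  by_contra hnot
  obtain ⟨V, hV, hfreq⟩ := not_tendsto_iff_exists_frequently_notMem.1 hnot
  obtain ⟨p, hp, hpV⟩ := exists_seq_forall_of_frequently hfreq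
  have hne : ∀ n, (p n).1 ≠ (p n).2 := fun n heq ↦
    hpV n (by simpa only [heq] using refl_mem_uniformity hV)
  obtain ⟨n, hn⟩ := ((hf _ _ hne hp).eventually hV).exists
  exact hpV n hn

theorem tendsto_uniformity_mul_of_isBoundedUnder {ι R : Type*} [NonUnitalSeminormedRing R]
    {l : Filter ι} {a a' b b' : ι → R}
    (ha : l.IsBoundedUnder (· ≤ ·) (norm ∘ a)) (hb' : l.IsBoundedUnder (· ≤ ·) (norm ∘ b'))
    (haa' : Tendsto (fun i ↦ (a i, a' i)) l (𝓤 R)) (hbb' : Tendsto (fun i ↦ (b i, b' i)) l (𝓤 R)) :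
    Tendsto (fun i ↦ (a i * b i, a' i * b' i)) l (𝓤 R) := by
  rw [uniformity_eq_comap_nhds_zero_swapped, tendsto_comap_iff] at haa' hbb' ⊢
  have hsplit : ∀ i, a i * (b i - b' i) + (a i - a' i) * b' i = a i * b i - a' i * b' i :=
    fun i ↦ by rw [mul_sub, sub_mul, sub_add_sub_cancel]
  have hsum := (isBoundedUnder_le_mul_tendsto_zero ha hbb').add
    (haa'.zero_mul_isBoundedUnder_le hb')
  rw [add_zero] at hsum
  exact hsum.congr hsplit

section BoundedUniformlyContinuous

variable {X : Type*} [UniformSpace X] {𝕜 E : Type*} [NormedField 𝕜] [SeminormedAddCommGroup E]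
  [NormedSpace 𝕜 E]

variable (X 𝕜 E) in
/-- The space of bounded uniformly continuous functions `X → E` with the supremum norm, as a
subspace of the bounded continuous functions. It is the Banach space to which the uniform
boundedness principle is applied. -/
def boundedUniformlyContinuous : Submodule 𝕜 (X →ᵇ E) where
  carrier := {g | UniformContinuous g}
  zero_mem' := uniformContinuous_const
  add_mem' hg hh := UniformContinuous.add hg hh
  smul_mem' c _ hg := UniformContinuous.const_smul hg c

theorem isClosed_boundedUniformlyContinuous :
    IsClosed (boundedUniformlyContinuous X 𝕜 E : Set (X →ᵇ E)) := by
  refine isClosed_of_closure_subset fun g hg ↦ ?_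
  obtain ⟨u, hu, hug⟩ := mem_closure_iff_seq_limit.1 hg
  exact (BoundedContinuousFunction.tendsto_iff_tendstoUniformly.1 hug).uniformContinuous
    (Frequently.of_forall hu)

instance [CompleteSpace E] : CompleteSpace (boundedUniformlyContinuous X 𝕜 E) :=
  isClosed_boundedUniformlyContinuous.completeSpace_coe

end BoundedUniformlyContinuous

section PseudoMetricSpace

variable {X : Type*} [PseudoMetricSpace X]

theorem exists_mem_boundedUniformlyContinuous_eq_dist_and_eq_zero (x y : X) :
    ∃ g ∈ boundedUniformlyContinuous X ℝ ℝ, g x = dist x y ∧ g y = 0 ∧ ‖g‖ ≤ dist x y := by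
  have huc : UniformContinuous fun z ↦ min (dist z y) (dist x y) :=
    ((LipschitzWith.dist_left y).min_const (dist x y)).uniformContinuous
  have hle : ∀ z, ‖min (dist z y) (dist x y)‖ ≤ dist x y := fun z ↦ by
    rw [Real.norm_of_nonneg (le_min dist_nonneg dist_nonneg)]
    exact min_le_right _ _
  exact ⟨.ofNormedAddCommGroup _ huc.continuous _ hle, huc, by simp, by simp,
    norm_ofNormedAddCommGroup_le huc.continuous dist_nonneg hle⟩

theorem exists_norm_le_of_forall_exists_norm_smul_sub_smul_le {ι F : Type*}
    [SeminormedAddCommGroup F] [NormedSpace ℝ F] {x y : ι → X} {a b : ι → F}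
    (hxy : ∀ i, 0 < dist (x i) (y i))
    (hbdd : ∀ g ∈ boundedUniformlyContinuous X ℝ ℝ,
      ∃ C, ∀ i, ‖g (x i) • a i - g (y i) • b i‖ ≤ C) :
    ∃ C, ∀ i, ‖a i‖ ≤ C := by
  let evalAt (z : X) : boundedUniformlyContinuous X ℝ ℝ →L[ℝ] ℝ :=
    (evalCLM ℝ z).comp (Submodule.subtypeL _)
  let T (i : ι) : boundedUniformlyContinuous X ℝ ℝ →L[ℝ] F :=
    (evalAt (x i)).smulRight (a i) - (evalAt (y i)).smulRight (b i)
  obtain ⟨C, hC⟩ : ∃ C, ∀ i, ‖T i‖ ≤ C := banach_steinhaus fun g ↦ hbdd g g.2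
  refine ⟨C, fun i ↦ ?_⟩
  obtain ⟨g, hg, hgx, hgy, hgnorm⟩ :=
    exists_mem_boundedUniformlyContinuous_eq_dist_and_eq_zero (x i) (y i)
  have hTg : T i ⟨g, hg⟩ = dist (x i) (y i) • a i := by simp [T, evalAt, hgx, hgy]
  refine le_of_mul_le_mul_left ?_ (hxy i)
  calc dist (x i) (y i) * ‖a i‖ = ‖T i ⟨g, hg⟩‖ := by
        rw [hTg, norm_smul, Real.norm_of_nonneg dist_nonneg]
    _ ≤ C * dist (x i) (y i) := (T i).le_of_opNorm_le_of_le (hC i) hgnorm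
    _ = dist (x i) (y i) * C := mul_comm _ _

theorem exists_norm_le_of_forall_uniformContinuous_smul {F : Type*} [SeminormedAddCommGroup F]
    [NormedSpace ℝ F] {f : X → F}
    (hf : ∀ g ∈ boundedUniformlyContinuous X ℝ ℝ, UniformContinuous fun z ↦ g z • f z)
    {x y : ℕ → X} (hne : ∀ n, 0 < dist (x n) (y n))
    (hxy : Tendsto (fun n ↦ dist (x n) (y n)) atTop (𝓝 0)) :
    ∃ C, ∀ n, ‖f (x n)‖ ≤ C := by
  have hpair : Tendsto (fun n ↦ (x n, y n)) atTop (𝓤 X) :=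
    tendsto_uniformity_iff_dist_tendsto_zero.2 hxy
  refine exists_norm_le_of_forall_exists_norm_smul_sub_smul_le (b := fun n ↦ f (y n)) hne
    fun g hg ↦ ?_
  have hpair_smul : Tendsto (fun n ↦ (g (x n) • f (x n), g (y n) • f (y n))) atTop (𝓤 F) :=
    Tendsto.comp (hf g hg) hpair
  obtain ⟨C, hC⟩ := (tendsto_uniformity_iff_dist_tendsto_zero.1 hpair_smul).bddAbove_range
  exact ⟨C, fun n ↦ (dist_eq_norm _ _).symm.trans_le (hC (Set.mem_range_self n))⟩

end PseudoMetricSpace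

section MetricSpace

variable {X : Type*} [MetricSpace X]

theorem IsRingUC.bourbakiBounded_range (hX : IsRingUC X) {x y : ℕ → X} (hne : ∀ n, x n ≠ y n)
    (hxy : Tendsto (fun n ↦ dist (x n) (y n)) atTop (𝓝 0)) :
    BourbakiBounded (Set.range x) := by
  intro f hf
  obtain ⟨C, hC⟩ := exists_norm_le_of_forall_uniformContinuous_smul
    (fun g hg ↦ hX g f hg hf) (fun n ↦ dist_pos.2 (hne n)) hxy
  exact ⟨C, Set.forall_mem_range.2 hC⟩

theorem BourbakiBounded.isBoundedUnder_norm_comp {ι : Type*} {l : Filter ι} {x : ι → X}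
    (hx : BourbakiBounded (Set.range x)) {f : X → ℝ} (hf : UniformContinuous f) :
    l.IsBoundedUnder (· ≤ ·) (norm ∘ f ∘ x) := by
  obtain ⟨M, hM⟩ := hx f hf
  exact isBoundedUnder_of ⟨M, Set.forall_mem_range.1 hM⟩

end MetricSpace

theorem stmt12 {X : Type*} [MetricSpace X] :
    IsRingUC X ↔
      ∀ x y : ℕ → X, (∀ n, x n ≠ y n) →
        Filter.Tendsto (fun n => dist (x n) (y n)) Filter.atTop (nhds 0) →
        BourbakiBounded (Set.range x) ∧ BourbakiBounded (Set.range y) := by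
  constructor
  · intro hX x y hne hxy
    have hyx : Tendsto (fun n ↦ dist (y n) (x n)) atTop (𝓝 0) := by
      simpa only [dist_comm] using hxy
    exact ⟨hX.bourbakiBounded_range hne hxy, hX.bourbakiBounded_range (fun n ↦ (hne n).symm) hyx⟩
  · intro htwin f g hf hg
    refine uniformContinuous_of_forall_seq_ne fun x y hne hxy ↦ ?_
    obtain ⟨hx, hy⟩ := htwin x y hne (tendsto_uniformity_iff_dist_tendsto_zero.1 hxy)
    exact tendsto_uniformity_mul_of_isBoundedUnder (hx.isBoundedUnder_norm_comp hf)
      (hy.isBoundedUnder_norm_comp hg) (Tendsto.comp hf hxy) (Tendsto.comp hg hxy)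
end

section
/- A metric space (Y,d) is a UC-space if and only if there exists a compact set K ⊆ Y such that for every ε > 0 the set Y \ B(K,ε) is uniformly isolated. -/
/-!
A UC-space has no two sequences `x n ≠ y n` with `dist (x n) (y n) → 0` and `x` without cluster
points: the points `x n`, `y n` would form a countable closed discrete set, and Tietze's theorem
would extend an injection of this set into `ℕ` to a continuous function separating `x n` from `y n`
by at least `1`. Every cluster point of such an `x` is an accumulation point of the space, so the
set of all accumulation points serves as `K`. Conversely, a continuous function is uniformly
continuous near a compact `K`, and away from `K` no two distinct points are close.
-/

open Filter Metric Set Topology Uniformity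

section ClusterPoints

variable {ι X : Type*}

theorem mapClusterPt_cofinite_of_accPt_range [TopologicalSpace X] [T1Space X] {x : ι → X} {a : X}
    (ha : AccPt a (𝓟 (range x))) : MapClusterPt a cofinite x := by
  rw [mapClusterPt_iff_frequently]
  intro U hU
  have hinf : (U ∩ range x).Infinite := .of_accPt (ha.nhds_inter hU)
  rw [frequently_cofinite_iff_infinite]
  rw [← image_preimage_eq_inter_range] at hinf
  exact hinf.of_image x

variable [UniformSpace X] {x y : ι → X} {l : Filter ι} {a : X}

theorem mapClusterPt_congr_uniformity (hxy : Tendsto (fun i => (x i, y i)) l (𝓤 X)) :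
    MapClusterPt a l x ↔ MapClusterPt a l y := by
  simp only [mapClusterPt_iff_ultrafilter]
  exact exists_congr fun _ => and_congr_right fun hU => Uniform.tendsto_congr (hxy.mono_left hU)

theorem accPt_univ_of_mapClusterPt (hxy : Tendsto (fun i => (x i, y i)) l (𝓤 X))
    (hne : ∀ i, x i ≠ y i) (ha : MapClusterPt a l x) : AccPt a (𝓟 univ) := by
  obtain ⟨u, hul, hxa⟩ := mapClusterPt_iff_ultrafilter.1 ha
  have hya : Tendsto y u (𝓝 a) := (Uniform.tendsto_congr (hxy.mono_left hul)).1 hxa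
  rw [accPt_iff_nhds]
  intro U hU
  obtain ⟨i, hxi, hyi⟩ := ((hxa.eventually_mem hU).and (hya.eventually_mem hU)).exists
  by_cases hxi_eq : x i = a
  · exact ⟨y i, ⟨hyi, trivial⟩, fun hyi_eq => hne i (hxi_eq.trans hyi_eq.symm)⟩
  · exact ⟨x i, ⟨hxi, trivial⟩, hxi_eq⟩

end ClusterPoints

theorem exists_continuous_pairwise_one_le_dist {X : Type*} [TopologicalSpace X] [NormalSpace X]
    {D : Set X} (hcount : D.Countable) (hclosed : IsClosed D) (hdiscrete : IsDiscrete D) :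
    ∃ f : X → ℝ, Continuous f ∧ D.Pairwise fun p q => 1 ≤ dist (f p) (f q) := by
  have := hcount.to_subtype
  have := hdiscrete.to_subtype
  obtain ⟨g, hg⟩ := Countable.exists_injective_nat D
  obtain ⟨f, hf⟩ := ContinuousMap.exists_restrict_eq hclosed
    (⟨fun d => (g d : ℝ), continuous_of_discreteTopology⟩ : C(D, ℝ))
  have hfg (d : D) : f d = g d := DFunLike.congr_fun hf d
  refine ⟨f, f.continuous, fun p hp q hq hpq => ?_⟩
  change 1 ≤ dist (f p) (f q)
  rw [hfg ⟨p, hp⟩, hfg ⟨q, hq⟩, Nat.dist_cast_real]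
  exact Nat.pairwise_one_le_dist (hg.ne (Subtype.coe_ne_coe.1 hpq))

/-- UC-spaces, also called Atsuji spaces. The notion only involves the uniform structure, so it is
stated for uniform spaces. -/
def IsUCSpace (X : Type*) [UniformSpace X] : Prop :=
  ∀ f : X → ℝ, Continuous f → UniformContinuous f

namespace IsUCSpace

theorem exists_accPt_range_union_range {X ι : Type*} [UniformSpace X] [NormalSpace X] [Countable ι]
    {l : Filter ι} [l.NeBot] (hX : IsUCSpace X) {x y : ι → X}
    (hxy : Tendsto (fun i => (x i, y i)) l (𝓤 X)) (hne : ∀ i, x i ≠ y i) :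
    ∃ a, AccPt a (𝓟 (range x ∪ range y)) := by
  by_contra! hacc
  have hD : IsClosed (range x ∪ range y) ∧ IsDiscrete (range x ∪ range y) :=
    isClosed_and_discrete_iff.2 fun a => disjoint_iff.2 (not_neBot.1 (hacc a))
  obtain ⟨f, hf, hsep⟩ := exists_continuous_pairwise_one_le_dist
    ((countable_range x).union (countable_range y)) hD.1 hD.2
  have hclose : ∀ᶠ i in l, dist (f (x i)) (f (y i)) < 1 :=
    (Tendsto.comp (hX f hf) hxy).eventually_mem (dist_mem_uniformity one_pos)
  obtain ⟨i, hi⟩ := hclose.exists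
  exact hi.not_ge (hsep (.inl (mem_range_self i)) (.inr (mem_range_self i)) (hne i))

theorem exists_mapClusterPt {X ι : Type*} [UniformSpace X] [T4Space X] [Countable ι] [Infinite ι]
    (hX : IsUCSpace X) {x y : ι → X} (hxy : Tendsto (fun i => (x i, y i)) cofinite (𝓤 X))
    (hne : ∀ i, x i ≠ y i) : ∃ a, MapClusterPt a cofinite x := by
  obtain ⟨a, ha⟩ := hX.exists_accPt_range_union_range hxy hne
  rw [← sup_principal, accPt_sup] at ha
  refine ⟨a, ha.elim mapClusterPt_cofinite_of_accPt_range fun hy => ?_⟩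
  exact (mapClusterPt_congr_uniformity hxy).2 (mapClusterPt_cofinite_of_accPt_range hy)

variable {X : Type*} [MetricSpace X]

theorem exists_mapClusterPt_mem_derivedSet (hX : IsUCSpace X) {x : ℕ → X} {r : ℕ → ℝ}
    (hr : Tendsto r atTop (𝓝 0)) (hx : ∀ n, ∃ y ∈ ball (x n) (r n), y ≠ x n) :
    ∃ a ∈ derivedSet (univ : Set X), MapClusterPt a atTop x := by
  choose y hy hne using hx
  have hxy : Tendsto (fun n => (x n, y n)) atTop (𝓤 X) :=
    tendsto_uniformity_iff_dist_tendsto_zero.2 <|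
      squeeze_zero (fun _ => dist_nonneg) (fun n => (mem_ball'.1 (hy n)).le) hr
  rw [← Nat.cofinite_eq_atTop] at hxy ⊢
  obtain ⟨a, ha⟩ := hX.exists_mapClusterPt hxy fun n => (hne n).symm
  exact ⟨a, accPt_univ_of_mapClusterPt hxy (fun n => (hne n).symm) ha, ha⟩

theorem isCompact_derivedSet_univ (hX : IsUCSpace X) : IsCompact (derivedSet (univ : Set X)) := by
  refine IsSeqCompact.isCompact fun x hx => ?_
  have hx' (n : ℕ) : ∃ y ∈ ball (x n) (1 / ((n : ℝ) + 1)), y ≠ x n := by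
    obtain ⟨y, ⟨hy, -⟩, hne⟩ := accPt_iff_nhds.1 (hx n) _ (ball_mem_nhds _ Nat.one_div_pos_of_nat)
    exact ⟨y, hy, hne⟩
  obtain ⟨a, ha, hxa⟩ :=
    hX.exists_mapClusterPt_mem_derivedSet tendsto_one_div_add_atTop_nhds_zero_nat hx'
  exact ⟨a, ha, hxa.tendsto_subseq⟩

theorem unifIsolated_univ_diff_enl_derivedSet_univ (hX : IsUCSpace X) {ε : ℝ} (hε : 0 < ε) :
    UnifIsolated (univ \ enl (derivedSet (univ : Set X)) ε) := by
  by_contra hiso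
  have hseq (n : ℕ) : ∃ p ∉ enl (derivedSet (univ : Set X)) ε,
      ∃ q ∈ ball p (1 / ((n : ℝ) + 1)), q ≠ p := by
    have hn : 0 < 1 / ((n : ℝ) + 1) := Nat.one_div_pos_of_nat
    by_contra! hsingle
    exact hiso ⟨_, hn, fun p hp => eq_singleton_iff_unique_mem.2
      ⟨mem_ball_self hn, hsingle p hp.2⟩⟩
  choose x hx_far hx using hseq
  obtain ⟨a, ha, hxa⟩ :=
    hX.exists_mapClusterPt_mem_derivedSet tendsto_one_div_add_atTop_nhds_zero_nat hx
  obtain ⟨n, hn⟩ := (hxa.frequently (ball_mem_nhds a hε)).exists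
  exact hx_far n (mem_biUnion ha hn)

end IsUCSpace

theorem uniformContinuous_of_unifIsolated_univ_diff_enl {X β : Type*} [MetricSpace X]
    [UniformSpace β] {K : Set X} (hK : IsCompact K)
    (hiso : ∀ ε > (0 : ℝ), UnifIsolated (univ \ enl K ε))
    {f : X → β} (hf : Continuous f) : UniformContinuous f := by
  intro V hV
  obtain ⟨W, hW, hW_symm, hWV⟩ := comp_symm_mem_uniformity_sets hV
  obtain ⟨δ, hδ, hfK⟩ := mem_uniformity_dist.1 <|
    hK.uniformContinuousAt_of_continuousAt f (fun _ _ => hf.continuousAt) hW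
  obtain ⟨η, hη, hball⟩ := hiso (δ / 2) (half_pos hδ)
  refine mem_uniformity_dist.2 ⟨min η (δ / 2), lt_min hη (half_pos hδ), fun a b hab => ?_⟩
  obtain ⟨habη, habδ⟩ := lt_min_iff.1 hab
  by_cases ha : a ∈ enl K (δ / 2)
  · obtain ⟨z, hz, haz⟩ := mem_iUnion₂.1 ha
    have hza : dist z a < δ / 2 := mem_ball'.1 haz
    have hzb : dist z b < δ := (dist_triangle z a b).trans_lt (by linarith)
    have hfza : (f z, f a) ∈ W := hfK (hza.trans (half_lt_self hδ)) hz
    have hfzb : (f z, f b) ∈ W := hfK hzb hz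
    exact hWV ⟨f z, SetRel.symm W hfza, hfzb⟩
  · have hb : b ∈ ball a η := mem_ball'.2 habη
    rw [hball a ⟨trivial, ha⟩, mem_singleton_iff] at hb
    subst hb
    exact mem_preimage.2 (refl_mem_uniformity hV)

theorem stmt15 {Y : Type*} [MetricSpace Y] :
    (∀ f : Y → ℝ, Continuous f → UniformContinuous f) ↔
      ∃ K : Set Y, IsCompact K ∧
        ∀ ε > (0 : ℝ), UnifIsolated (Set.univ \ enl K ε) := by
  constructor
  · intro (hY : IsUCSpace Y)
    exact ⟨derivedSet univ, hY.isCompact_derivedSet_univ,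
      fun _ => hY.unifIsolated_univ_diff_enl_derivedSet_univ⟩
  · rintro ⟨K, hK, hiso⟩ f hf
    exact uniformContinuous_of_unifIsolated_univ_diff_enl hK hiso hf
end

section
/- Let (X,d) be a metric space, L a Bourbaki bounded subset of X, and M ⊆ X with L ⊆ M. If X \ M is uniformly isolated in X, then L is Bourbaki bounded in the metric subspace (M,d), that is, every uniformly continuous function g : M → ℝ is bounded on L. -/
/-!
Distinct points at small distance both lie in `M`, because the points outside `M` are uniformly
isolated. So any extension to `X` of a uniformly continuous function on `M` is uniformly continuous,
however it is chosen outside `M`, and Bourbaki boundedness of `L` in `X` applies to it.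
-/

open Filter Uniformity

namespace UnifIsolated

variable {X Y : Type*} [MetricSpace X] {A M : Set X}

theorem eventually_uniformity_eq (hA : UnifIsolated A) :
    ∀ᶠ p in 𝓤 X, p.1 ∈ A ∨ p.2 ∈ A → p.1 = p.2 := by
  obtain ⟨ε, hε, hball⟩ := hA
  filter_upwards [Metric.dist_mem_uniformity hε] with ⟨x, y⟩ hxy
  rintro (hx | hy)
  · have hy_ball : y ∈ Metric.ball x ε := Metric.mem_ball'.2 hxy
    rw [hball x hx] at hy_ball
    exact hy_ball.symm
  · have hx_ball : x ∈ Metric.ball y ε := hxy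
    rwa [hball y hy] at hx_ball

theorem uniformContinuous_of_uniformContinuousOn [UniformSpace Y] (hM : UnifIsolated Mᶜ)
    {f : X → Y} (hf : UniformContinuousOn f M) : UniformContinuous f := by
  intro V hV
  change ∀ᶠ p in 𝓤 X, (f p.1, f p.2) ∈ V
  have hf_near : ∀ᶠ p in 𝓤 X, p ∈ M ×ˢ M → (f p.1, f p.2) ∈ V :=
    eventually_inf_principal.1 (hf hV)
  filter_upwards [hM.eventually_uniformity_eq, hf_near] with ⟨x, y⟩ heq hfxy
  by_cases hxy : x = y
  · subst hxy
    exact refl_mem_uniformity hV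
  · obtain ⟨hx, hy⟩ := not_or.1 (mt heq hxy)
    exact hfxy ⟨not_not.1 hx, not_not.1 hy⟩

theorem exists_uniformContinuous_extension [UniformSpace Y] [Nonempty Y] (hM : UnifIsolated Mᶜ)
    {g : M → Y} (hg : UniformContinuous g) :
    ∃ f : X → Y, UniformContinuous f ∧ ∀ x : M, f x = g x := by
  obtain ⟨f, hfg⟩ : ∃ f : X → Y, f ∘ Subtype.val = g :=
    Subtype.val_injective.surjective_comp_right g
  refine ⟨f, hM.uniformContinuous_of_uniformContinuousOn ?_, congrFun hfg⟩
  rwa [uniformContinuousOn_iff_restrict, Set.domRestrict_eq, hfg]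

end UnifIsolated

theorem stmt16 {X : Type*} [MetricSpace X] (L M : Set X)
    (hLbb : BourbakiBounded L) (hLM : L ⊆ M)
    (hiso : UnifIsolated (Set.univ \ M)) :
    ∀ g : M → ℝ, UniformContinuous g →
      ∃ C : ℝ, ∀ x : M, (x : X) ∈ L → |g x| ≤ C := by
  intro g hg
  rw [← Set.compl_eq_univ_sdiff] at hiso
  obtain ⟨f, hf, hfg⟩ := hiso.exists_uniformContinuous_extension hg
  obtain ⟨C, hC⟩ := hLbb f hf
  exact ⟨C, fun x hx => hfg x ▸ hC x hx⟩
end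

section
/- Let (X,d) be a metric space and let L ⊆ X be nonempty. Define δ_L on X by δ_L(x,y) = d(x,y) + max{d(x,L), d(y,L)} for x ≠ y and δ_L(x,x) = 0, where d(x,L) = inf{d(x,z) : z ∈ L}; then δ_L is a metric on X. For every η > 0, the set X \ B_{δ_L}(L,η) is uniformly η/2-isolated in (X,δ_L), i.e., for every x ∉ B_{δ_L}(L,η) and every y ∈ X with y ≠ x one has δ_L(x,y) ≥ η/2; here B_{δ_L}(L,η) = {x ∈ X : δ_L(x,z) < η for some z ∈ L}. -/
open Classical in
/-- The metric `δ_L(x,y) = d(x,y) + max{d(x,L), d(y,L)}` for `x ≠ y`, and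
`δ_L(x,x) = 0`. -/
noncomputable def deltaL {X : Type*} [MetricSpace X] (L : Set X) (x y : X) : ℝ :=
  if x = y then 0 else dist x y + max (Metric.infDist x L) (Metric.infDist y L)

/-! Points `z ∈ L` satisfy `δ_L(x,z) ≤ d(x,z) + d(x,L)`. If `δ_L(x,z) ≥ η` for all of them, taking
the infimum over `z` gives `η ≤ 2 d(x,L)`, while `d(x,L) ≤ δ_L(x,y)` for every `y ≠ x`. -/

open Metric

theorem max_le_max_add_max {α : Type*} [AddCommMonoid α] [LinearOrder α] [IsOrderedAddMonoid α]
    {a b c : α} (hb : 0 ≤ b) : max a c ≤ max a b + max b c :=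
  max_le (le_add_of_le_of_nonneg (le_max_left a b) (le_max_of_le_left hb))
    (le_add_of_nonneg_of_le (le_max_of_le_right hb) (le_max_right b c))

section deltaL

variable {X : Type*} [MetricSpace X] (L : Set X)

theorem deltaL_self (x : X) : deltaL L x x = 0 :=
  if_pos rfl

theorem deltaL_of_ne {x y : X} (hxy : x ≠ y) :
    deltaL L x y = dist x y + max (infDist x L) (infDist y L) :=
  if_neg hxy

theorem deltaL_le_dist_add_max (x y : X) :
    deltaL L x y ≤ dist x y + max (infDist x L) (infDist y L) := by
  rcases eq_or_ne x y with rfl | hxy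
  · rw [deltaL_self]
    exact add_nonneg dist_nonneg (le_max_of_le_left infDist_nonneg)
  · exact (deltaL_of_ne L hxy).le

theorem dist_le_deltaL (x y : X) : dist x y ≤ deltaL L x y := by
  rcases eq_or_ne x y with rfl | hxy
  · rw [deltaL_self, dist_self]
  · rw [deltaL_of_ne L hxy]
    exact le_add_of_nonneg_right (le_max_of_le_left infDist_nonneg)

theorem eq_of_deltaL_eq_zero {x y : X} (h : deltaL L x y = 0) : x = y :=
  dist_le_zero.mp ((dist_le_deltaL L x y).trans_eq h)

theorem deltaL_comm (x y : X) : deltaL L x y = deltaL L y x := by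
  rcases eq_or_ne x y with rfl | hxy
  · rfl
  · rw [deltaL_of_ne L hxy, deltaL_of_ne L hxy.symm, dist_comm, max_comm]

theorem deltaL_triangle (x y z : X) : deltaL L x z ≤ deltaL L x y + deltaL L y z := by
  rcases eq_or_ne x y with rfl | hxy
  · rw [deltaL_self, zero_add]
  rcases eq_or_ne y z with rfl | hyz
  · rw [deltaL_self, add_zero]
  calc
    deltaL L x z ≤ dist x z + max (infDist x L) (infDist z L) := deltaL_le_dist_add_max L x z
    _ ≤ (dist x y + dist y z) +
          (max (infDist x L) (infDist y L) + max (infDist y L) (infDist z L)) :=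
        add_le_add (dist_triangle x y z) (max_le_max_add_max infDist_nonneg)
    _ = deltaL L x y + deltaL L y z := by
        rw [deltaL_of_ne L hxy, deltaL_of_ne L hyz, add_add_add_comm]

theorem infDist_le_deltaL {x y : X} (hxy : x ≠ y) : infDist x L ≤ deltaL L x y := by
  rw [deltaL_of_ne L hxy]
  exact le_add_of_nonneg_of_le dist_nonneg (le_max_left _ _)

variable {L}

theorem deltaL_le_dist_add_infDist_of_mem (x : X) {z : X} (hz : z ∈ L) :
    deltaL L x z ≤ dist x z + infDist x L := by
  simpa only [infDist_zero_of_mem hz, max_eq_left infDist_nonneg] using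
    deltaL_le_dist_add_max L x z

theorem half_le_infDist_of_forall_le_deltaL (hL : L.Nonempty) {η : ℝ} {x : X}
    (hx : ∀ z ∈ L, η ≤ deltaL L x z) : η / 2 ≤ infDist x L := by
  have sub_le_infDist : η - infDist x L ≤ infDist x L :=
    (le_infDist hL).mpr fun z hz =>
      sub_le_iff_le_add.mpr ((hx z hz).trans (deltaL_le_dist_add_infDist_of_mem x hz))
  linarith

end deltaL

theorem stmt17 {X : Type*} [MetricSpace X] (L : Set X) (hL : L.Nonempty) :
    ((∀ x : X, deltaL L x x = 0) ∧
     (∀ x y : X, deltaL L x y = 0 → x = y) ∧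
     (∀ x y : X, deltaL L x y = deltaL L y x) ∧
     (∀ x y z : X, deltaL L x z ≤ deltaL L x y + deltaL L y z)) ∧
    (∀ η > (0 : ℝ), ∀ x : X, x ∉ {w : X | ∃ z ∈ L, deltaL L w z < η} →
      ∀ y : X, y ≠ x → η / 2 ≤ deltaL L x y) := by
  refine ⟨⟨deltaL_self L, fun _ _ => eq_of_deltaL_eq_zero L, deltaL_comm L, deltaL_triangle L⟩, ?_⟩
  intro η _ x hx y hyx
  have le_deltaL : ∀ z ∈ L, η ≤ deltaL L x z := fun z hz =>
    not_lt.mp fun hlt => hx ⟨z, hz, hlt⟩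
  exact (half_le_infDist_of_forall_le_deltaL hL le_deltaL).trans (infDist_le_deltaL L hyx.symm)
end
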